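/- arXiv:2409.10979 — 4 statements merged into one kernel-verified Lean document; each statement's English description precedes it below -/
import Mathlib

section
/- Let n be a positive integer and let x ∈ 𝔽₂ⁿ be a vector whose Hamming weight satisfies 0 < wt_H(x) < n. Then wt_H(x) + 1 ≤ wt_sp(x) ≤ 2·wt_H(x). -/
/-- Hamming weight of a binary vector. -/
def wtH {n : ℕ} (x : Fin n → ZMod 2) : ℕ :=
  (Finset.univ.filter fun i => x i ≠ 0).card

/-- Symbol-pair weight of a binary vector (indices mod n). -/
def wtSp {n : ℕ} [NeZero n] (x : Fin n → ZMod 2) : ℕ :=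
  (Finset.univ.filter fun i => (x i, x (i + 1)) ≠ (0, 0)).card

/-- Symplectic weight of a pair (a | b). -/
def wtSymp {n : ℕ} (a b : Fin n → ZMod 2) : ℕ :=
  (Finset.univ.filter fun i => (a i, b i) ≠ (0, 0)).card

/-- Left cyclic shift: (c₀, c₁, …, c_{n−1}) ↦ (c₁, …, c_{n−1}, c₀). -/
def L {n : ℕ} [NeZero n] (c : Fin n → ZMod 2) : Fin n → ZMod 2 :=
  fun i => c (i + 1)

/-- Right cyclic shift: (a₀, a₁, …, a_{n−1}) ↦ (a_{n−1}, a₀, …, a_{n−2}). -/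
def R {n : ℕ} [NeZero n] (a : Fin n → ZMod 2) : Fin n → ZMod 2 :=
  fun i => a (i - 1)

/-- Minimum Hamming distance of a code: min Hamming weight of a nonzero codeword. -/
noncomputable def dH {n : ℕ} (C : Submodule (ZMod 2) (Fin n → ZMod 2)) : ℕ :=
  sInf (wtH '' {x | x ∈ C ∧ x ≠ 0})

/-- Minimum symbol-pair distance of a code: min symbol-pair weight of a nonzero codeword. -/
noncomputable def dSp {n : ℕ} [NeZero n] (C : Submodule (ZMod 2) (Fin n → ZMod 2)) : ℕ :=
  sInf (wtSp '' {x | x ∈ C ∧ x ≠ 0})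

/-- The dual code w.r.t. the standard bilinear form ⟨x, y⟩ = ∑ i, x i * y i. -/
def dualCode {n : ℕ} (C : Submodule (ZMod 2) (Fin n → ZMod 2)) :
    Submodule (ZMod 2) (Fin n → ZMod 2) where
  carrier := {x | ∀ y ∈ C, ∑ i, x i * y i = 0}
  add_mem' := by
    intro a b ha hb y hy
    simp only [Pi.add_apply, add_mul, Finset.sum_add_distrib, ha y hy, hb y hy, add_zero]
  zero_mem' := by
    intro y hy
    simp
  smul_mem' := by
    intro c a ha y hy
    simp only [Pi.smul_apply, smul_eq_mul, mul_assoc, ← Finset.mul_sum, ha y hy, mul_zero]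

/-- A linear code is cyclic if it is closed under cyclic shifts. -/
def IsCyclicCode {n : ℕ} [NeZero n] (C : Submodule (ZMod 2) (Fin n → ZMod 2)) : Prop :=
  ∀ x ∈ C, R x ∈ C

/-!
A pair `(x i, x (i + 1))` is nonzero exactly when `i` lies in the support of `x` or in its
translate by `-1`. Two sets of size `wtH x` cover at most `2 * wtH x` positions. The support alone
accounts for `wtH x` of them, and going around the circle from a zero of `x` to a nonzero entry
there is a step entering the support, which provides one more.
-/

open Finset

/-- The symbol-pair weight over an arbitrary alphabet and index type, where `f i` is the position
that follows `i`; the usual cyclic reading order on `Fin n` is `f = finRotate n`. -/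
def pairNorm {ι M : Type*} [Fintype ι] [Zero M] [DecidableEq M] (f : ι → ι) (x : ι → M) : ℕ :=
  #{i | (x i, x (f i)) ≠ (0, 0)}

theorem exists_notMem_apply_mem_of_isCycleOn {α : Type*} {σ : Equiv.Perm α} {s t : Set α} {a b : α}
    (hσ : σ.IsCycleOn t) (ht : t.Finite) (hat : a ∈ t) (has : a ∉ s) (hbt : b ∈ t) (hbs : b ∈ s) :
    ∃ c ∈ t, c ∉ s ∧ σ c ∈ s := by
  by_contra! h
  have hmaps : Set.MapsTo σ (t \ s) (t \ s) := fun c hc ↦ ⟨hσ.1.mapsTo hc.1, h c hc.1 hc.2⟩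
  obtain ⟨k, -, rfl⟩ := hσ.exists_pow_eq' ht hat hbt
  rw [← Equiv.Perm.iterate_eq_pow] at hbs
  exact (hmaps.iterate k ⟨hat, has⟩).2 hbs

theorem isCycleOn_univ_finRotate (n : ℕ) : (finRotate n).IsCycleOn Set.univ := by
  refine ⟨Set.bijOn_univ.2 (finRotate n).bijective, fun i _ j _ ↦ ⟨(j - i).val, ?_⟩⟩
  have : NeZero n := i.neZero
  rw [zpow_natCast, ← Equiv.Perm.iterate_eq_pow, ← finCycle_eq_finRotate_iterate, finCycle_apply,
    add_sub_cancel]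

section Alphabet

variable {ι M : Type*} [Fintype ι] [Zero M] [DecidableEq M]

theorem exists_eq_zero_of_hammingNorm_lt_card {x : ι → M} (hx : hammingNorm x < Fintype.card ι) :
    ∃ i, x i = 0 := by
  obtain ⟨i, -, hi⟩ := exists_mem_notMem_of_card_lt_card (hx.trans_eq card_univ.symm)
  exact ⟨i, by simpa using hi⟩

theorem hammingNorm_comp_le_of_injective {κ : Type*} [Fintype κ] {f : κ → ι}
    (hf : f.Injective) (x : ι → M) : hammingNorm (x ∘ f) ≤ hammingNorm x :=
  card_le_card_of_injOn f (by simp [Set.MapsTo]) hf.injOn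

theorem pairNorm_le_hammingNorm_add_hammingNorm_comp (f : ι → ι) (x : ι → M) :
    pairNorm f x ≤ hammingNorm x + hammingNorm (x ∘ f) := by
  classical
  simp only [pairNorm, ne_eq, Prod.mk.injEq, not_and_or, filter_or]
  exact card_union_le _ _

theorem pairNorm_le_two_mul_hammingNorm {f : ι → ι} (hf : f.Injective) (x : ι → M) :
    pairNorm f x ≤ 2 * hammingNorm x :=
  calc
    pairNorm f x ≤ hammingNorm x + hammingNorm (x ∘ f) :=
      pairNorm_le_hammingNorm_add_hammingNorm_comp f x
    _ ≤ hammingNorm x + hammingNorm x := by grw [hammingNorm_comp_le_of_injective hf]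
    _ = 2 * hammingNorm x := (two_mul _).symm

theorem hammingNorm_lt_pairNorm {f : ι → ι} {x : ι → M} {i : ι} (hi : x i = 0)
    (hfi : x (f i) ≠ 0) : hammingNorm x < pairNorm f x := by
  have hsub : ({j | x j ≠ 0} : Finset ι) ⊆ ({j | (x j, x (f j)) ≠ (0, 0)} : Finset ι) :=
    monotone_filter_right _ fun j _ hj hpair ↦ hj (congrArg Prod.fst hpair)
  exact card_lt_card <|
    (ssubset_iff_of_subset hsub).2 ⟨i, by simpa [hi] using hfi, by simpa using hi⟩

theorem wtH_add_one_le_wtSp_le_two_mul_wtH_general {σ : Equiv.Perm ι}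
    (hσ : σ.IsCycleOn Set.univ) {x : ι → M} (h0 : 0 < hammingNorm x)
    (hn : hammingNorm x < Fintype.card ι) :
    hammingNorm x + 1 ≤ pairNorm σ x ∧ pairNorm σ x ≤ 2 * hammingNorm x := by
  obtain ⟨a, ha⟩ := exists_eq_zero_of_hammingNorm_lt_card hn
  obtain ⟨b, hb⟩ := Function.ne_iff.1 (hammingNorm_pos_iff.1 h0)
  obtain ⟨c, -, hc, hσc⟩ := exists_notMem_apply_mem_of_isCycleOn (s := Function.support x) hσ
    Set.finite_univ (Set.mem_univ a) (Function.notMem_support.2 ha) (Set.mem_univ b) hb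
  exact ⟨hammingNorm_lt_pairNorm (Function.notMem_support.1 hc) hσc,
    pairNorm_le_two_mul_hammingNorm σ.injective x⟩

end Alphabet

theorem wtH_eq_hammingNorm {n : ℕ} (x : Fin n → ZMod 2) : wtH x = hammingNorm x := rfl

theorem wtSp_eq_pairNorm_finRotate {n : ℕ} [NeZero n] (x : Fin n → ZMod 2) :
    wtSp x = pairNorm (finRotate n) x := by
  simp only [wtSp, pairNorm, finRotate_apply]

/-- for 0 < wt_H(x) < n, wt_H(x) + 1 ≤ wt_sp(x) ≤ 2·wt_H(x). -/
theorem wtH_add_one_le_wtSp_le_two_mul_wtH (n : ℕ) [NeZero n] (x : Fin n → ZMod 2)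
    (h0 : 0 < wtH x) (hn : wtH x < n) :
    wtH x + 1 ≤ wtSp x ∧ wtSp x ≤ 2 * wtH x := by
  rw [wtH_eq_hammingNorm] at h0 hn ⊢
  rw [wtSp_eq_pairNorm_finRotate]
  exact wtH_add_one_le_wtSp_le_two_mul_wtH_general (isCycleOn_univ_finRotate n) h0
    (by simpa using hn)
end

section
/- Let C ⊆ 𝔽₂ⁿ be a binary linear code with parity-check matrix H having rows h₁, …, h_{n−k}, and let t_p be a nonnegative integer with d_sp(C) ≥ 2·t_p + 1 (so C can correct up to t_p symbol-pair errors). Then the map sending a pair-error vector e ∈ (𝔽₂ × 𝔽₂)ⁿ to the pair (s^p(e), s^n(e)) of its symbol-pair syndrome and its neighbour-symbol syndrome is injective on the set of pair-error vectors of pair weight at most t_p; equivalently, two pair-error vectors of pair weight at most t_p with equal symbol-pair syndromes and equal neighbour-symbol syndromes are equal. -/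
/-- Pair weight of a pair-error vector e ∈ (𝔽₂ × 𝔽₂)ⁿ. -/
def pairWt {n : ℕ} (e : Fin n → ZMod 2 × ZMod 2) : ℕ :=
  (Finset.univ.filter fun i => e i ≠ (0, 0)).card

/-- Symbol-pair syndrome of a pair-error vector w.r.t. a parity-check matrix H:
its j-th entry is (∑ i, ◁eᵢ · (h_j)ᵢ, ∑ i, ▷eᵢ · (h_j)_{i+1}). -/
def pairSyndrome {n m : ℕ} [NeZero n] (H : Fin m → Fin n → ZMod 2)
    (e : Fin n → ZMod 2 × ZMod 2) : Fin m → ZMod 2 × ZMod 2 :=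
  fun j => (∑ i, (e i).1 * H j i, ∑ i, (e i).2 * H j (i + 1))

/-- Neighbour-symbol syndrome: (◁e₀ + ▷e_{n−1}, ◁e₁ + ▷e₀, …, ◁e_{n−1} + ▷e_{n−2}). -/
def nbrSyndrome {n : ℕ} [NeZero n] (e : Fin n → ZMod 2 × ZMod 2) : Fin n → ZMod 2 :=
  fun i => (e i).1 + (e (i - 1)).2

/-!
Both syndromes are additive, so it suffices to show that a pair-error vector `e` of pair weight
less than `dSp C` vanishes as soon as its two syndromes do. In characteristic 2, a zero
neighbour-symbol syndrome says `▷eᵢ = ◁eᵢ₊₁`, that is, `e` is the symbol-pair read vector of some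
`x`. For such a vector both halves of the symbol-pair syndrome are the ordinary syndrome `H x`, so
`x` is a codeword, and its symbol-pair weight is the pair weight of `e`; hence `x = 0`.
-/

/-- The symbol-pair read vector `π(x)` of `x`. -/
def pairRead {n : ℕ} [NeZero n] (x : Fin n → ZMod 2) : Fin n → ZMod 2 × ZMod 2 :=
  fun i => (x i, x (i + 1))

section Weight

variable {n : ℕ}

theorem pairWt_eq_hammingNorm (e : Fin n → ZMod 2 × ZMod 2) : pairWt e = hammingNorm e :=
  rfl

theorem pairWt_sub_le (e₁ e₂ : Fin n → ZMod 2 × ZMod 2) :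
    pairWt (e₁ - e₂) ≤ pairWt e₁ + pairWt e₂ := by
  calc pairWt (e₁ - e₂) = hammingDist e₂ e₁ := by
        rw [pairWt_eq_hammingNorm, hammingDist_eq_hammingNorm, sub_eq_neg_add]
    _ = hammingDist e₁ e₂ := hammingDist_comm e₂ e₁
    _ ≤ hammingDist e₁ 0 + hammingDist e₂ 0 := hammingDist_triangle_right e₁ e₂ 0
    _ = pairWt e₁ + pairWt e₂ := by
        simp only [hammingDist_zero_right, pairWt_eq_hammingNorm]

variable [NeZero n]

theorem pairWt_pairRead (x : Fin n → ZMod 2) : pairWt (pairRead x) = wtSp x :=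
  rfl

theorem dSp_le_wtSp {C : Submodule (ZMod 2) (Fin n → ZMod 2)} {x : Fin n → ZMod 2}
    (hxC : x ∈ C) (hx : x ≠ 0) : dSp C ≤ wtSp x :=
  Nat.sInf_le ⟨x, ⟨hxC, hx⟩, rfl⟩

end Weight

section Syndrome

variable {n m : ℕ} [NeZero n]

theorem pairSyndrome_sub (H : Fin m → Fin n → ZMod 2) (e₁ e₂ : Fin n → ZMod 2 × ZMod 2) :
    pairSyndrome H (e₁ - e₂) = pairSyndrome H e₁ - pairSyndrome H e₂ := by
  ext j <;> simp [pairSyndrome, sub_mul]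

theorem nbrSyndrome_sub (e₁ e₂ : Fin n → ZMod 2 × ZMod 2) :
    nbrSyndrome (e₁ - e₂) = nbrSyndrome e₁ - nbrSyndrome e₂ :=
  funext fun _ => (add_sub_add_comm _ _ _ _).symm

theorem nbrSyndrome_eq_zero_iff {e : Fin n → ZMod 2 × ZMod 2} :
    nbrSyndrome e = 0 ↔ ∃ x, pairRead x = e := by
  constructor
  · intro he
    refine ⟨fun i => (e i).1, funext fun i => Prod.ext rfl ?_⟩
    have hi : (e (i + 1)).1 + (e i).2 = 0 := by
      simpa only [nbrSyndrome, add_sub_cancel_right, Pi.zero_apply] using congrFun he (i + 1)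
    exact CharTwo.add_eq_zero.mp hi
  · rintro ⟨x, rfl⟩
    ext i
    simp [nbrSyndrome, pairRead, CharTwo.add_self_eq_zero]

theorem pairSyndrome_pairRead (H : Fin m → Fin n → ZMod 2) (x : Fin n → ZMod 2) (j : Fin m) :
    pairSyndrome H (pairRead x) j = (∑ i, H j i * x i, ∑ i, H j i * x i) := by
  have shift : ∑ i, H j (i + 1) * x (i + 1) = ∑ i, H j i * x i :=
    Equiv.sum_comp (Equiv.addRight (1 : Fin n)) fun i => H j i * x i
  simp only [pairSyndrome, pairRead, mul_comm (x _), shift]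

theorem pairSyndrome_pairRead_eq_zero_iff {H : Fin m → Fin n → ZMod 2} {x : Fin n → ZMod 2} :
    pairSyndrome H (pairRead x) = 0 ↔ ∀ j, ∑ i, H j i * x i = 0 := by
  simp [funext_iff, pairSyndrome_pairRead]

theorem eq_zero_of_syndromes_eq_zero {C : Submodule (ZMod 2) (Fin n → ZMod 2)}
    {H : Fin m → Fin n → ZMod 2} (hH : ∀ x, (∀ j, ∑ i, H j i * x i = 0) → x ∈ C)
    {e : Fin n → ZMod 2 × ZMod 2} (hw : pairWt e < dSp C)
    (hp : pairSyndrome H e = 0) (hs : nbrSyndrome e = 0) : e = 0 := by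
  obtain ⟨x, rfl⟩ := nbrSyndrome_eq_zero_iff.mp hs
  have hxC : x ∈ C := hH x (pairSyndrome_pairRead_eq_zero_iff.mp hp)
  have hx : x = 0 := by
    by_contra hx
    exact (dSp_le_wtSp hxC hx).not_gt (pairWt_pairRead x ▸ hw)
  rw [hx]
  rfl

end Syndrome

/-- if d_sp(C) ≥ 2t_p + 1, then (s^p, s^n) is injective on pair-error
vectors of pair weight ≤ t_p. -/
theorem pair_syndrome_decoding (n m : ℕ) [NeZero n]
    (C : Submodule (ZMod 2) (Fin n → ZMod 2))
    (H : Fin m → Fin n → ZMod 2)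
    (hH : ∀ x, x ∈ C ↔ ∀ j, ∑ i, H j i * x i = 0)
    (tp : ℕ) (hd : 2 * tp + 1 ≤ dSp C)
    (e₁ e₂ : Fin n → ZMod 2 × ZMod 2)
    (h₁ : pairWt e₁ ≤ tp) (h₂ : pairWt e₂ ≤ tp)
    (hp : pairSyndrome H e₁ = pairSyndrome H e₂)
    (hs : nbrSyndrome e₁ = nbrSyndrome e₂) :
    e₁ = e₂ := by
  have hw : pairWt (e₁ - e₂) < dSp C := by
    have := pairWt_sub_le e₁ e₂
    lia
  have hp₀ : pairSyndrome H (e₁ - e₂) = 0 := by rw [pairSyndrome_sub, hp, sub_self]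
  have hs₀ : nbrSyndrome (e₁ - e₂) = 0 := by rw [nbrSyndrome_sub, hs, sub_self]
  exact sub_eq_zero.mp (eq_zero_of_syndromes_eq_zero (fun x => (hH x).mpr) hw hp₀ hs₀)
end

section
/- Let C ⊆ 𝔽₂ⁿ be a binary cyclic linear code satisfying C^⊥ ⊆ C, and write d_H := d_H(C) and d_p := d_sp(C). Suppose (a₁ | b₁) and (a₂ | b₂) are error pairs in 𝔽₂ⁿ × 𝔽₂ⁿ such that for each i ∈ {1,2}: wt_symp(a_i | b_i) ≤ ⌊(d_p − 1)/2⌋ and wt_H(b_i + R(a_i)) ≤ ⌊(d_H − 1)/2⌋. If the two errors have the same CSS syndrome, i.e. a₁ + a₂ ∈ C and b₁ + b₂ ∈ C, then a₁ = a₂ and b₁ = b₂. (That is, the CSS code built from C and C^⊥ corrects every error (a | b) with wt_symp(a | b) ≤ ⌊(d_p − 1)/2⌋ and wt_H(b + R(a)) ≤ ⌊(d_H − 1)/2⌋.) -/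
/-!
If two errors with the same syndrome differ by `(x | y) ∈ C × C`, then `y + R x` is again a codeword
because `C` is cyclic, and it is too light to be nonzero, so `y = R x`. The symplectic weight of
`(x | R x)` is the symbol-pair weight of `x`, so `x` is in turn too light to be nonzero.
-/

section HammingNorm

variable {ι : Type*} [Fintype ι] {β : ι → Type*} [∀ i, DecidableEq (β i)] [∀ i, AddGroup (β i)]

theorem hammingNorm_add_le (x y : ∀ i, β i) :
    hammingNorm (x + y) ≤ hammingNorm x + hammingNorm y :=
  calc hammingNorm (x + y)
      = hammingDist (-x) y := by rw [hammingDist_eq_hammingNorm, neg_neg]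
    _ ≤ hammingDist (-x) 0 + hammingDist 0 y := hammingDist_triangle (-x) 0 y
    _ = hammingNorm x + hammingNorm y := by
      rw [hammingDist_eq_hammingNorm, neg_neg, add_zero, hammingDist_zero_left]

end HammingNorm

section Weights

variable {n : ℕ}

theorem wtSymp_eq_hammingNorm (a b : Fin n → ZMod 2) :
    wtSymp a b = hammingNorm fun i => (a i, b i) := rfl

theorem wtH_eq_zero {x : Fin n → ZMod 2} : wtH x = 0 ↔ x = 0 :=
  hammingNorm_eq_zero

theorem wtH_add_le (x y : Fin n → ZMod 2) : wtH (x + y) ≤ wtH x + wtH y :=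
  hammingNorm_add_le x y

theorem wtSymp_eq_zero {a b : Fin n → ZMod 2} : wtSymp a b = 0 ↔ a = 0 ∧ b = 0 := by
  simp only [wtSymp_eq_hammingNorm, hammingNorm_eq_zero, funext_iff, Pi.zero_apply,
    Prod.mk_eq_zero, forall_and]

theorem wtSymp_add_le (a₁ b₁ a₂ b₂ : Fin n → ZMod 2) :
    wtSymp (a₁ + a₂) (b₁ + b₂) ≤ wtSymp a₁ b₁ + wtSymp a₂ b₂ :=
  hammingNorm_add_le (fun i => (a₁ i, b₁ i)) fun i => (a₂ i, b₂ i)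

variable [NeZero n]

theorem R_add (a b : Fin n → ZMod 2) : R (a + b) = R a + R b := rfl

theorem R_zero : R (0 : Fin n → ZMod 2) = 0 := rfl

theorem wtSymp_R (x : Fin n → ZMod 2) : wtSymp x (R x) = wtSp x := by
  refine (Finset.card_equiv (Equiv.addRight 1) fun i => ?_).symm
  simp [R, imp_not_comm]

theorem wtSp_eq_zero {x : Fin n → ZMod 2} : wtSp x = 0 ↔ x = 0 := by
  rw [← wtSymp_R, wtSymp_eq_zero, and_iff_left_of_imp]
  rintro rfl
  exact R_zero

end Weights

section MinimumDistance

-- When `s` has no nonzero element the infimum is the junk value `0`, and the bound reads `w x ≤ 0`.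
theorem eq_zero_of_le_sInf_sub_one {M : Type*} [Zero M] {w : M → ℕ}
    (hw : ∀ x, w x = 0 → x = 0) {s : Set M} {x : M} (hx : x ∈ s)
    (hle : w x ≤ sInf (w '' {y | y ∈ s ∧ y ≠ 0}) - 1) : x = 0 := by
  by_contra hne
  have hmin : sInf (w '' {y | y ∈ s ∧ y ≠ 0}) ≤ w x := Nat.sInf_le ⟨x, ⟨hx, hne⟩, rfl⟩
  exact hne (hw x (by lia))

variable {n : ℕ} {C : Submodule (ZMod 2) (Fin n → ZMod 2)} {x y : Fin n → ZMod 2}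

theorem eq_zero_of_mem_of_wtH_le (hx : x ∈ C) (hle : wtH x ≤ dH C - 1) : x = 0 :=
  eq_zero_of_le_sInf_sub_one (s := (C : Set (Fin n → ZMod 2))) (w := wtH)
    (fun _ => wtH_eq_zero.mp) hx hle

variable [NeZero n]

theorem eq_zero_of_mem_of_wtSp_le (hx : x ∈ C) (hle : wtSp x ≤ dSp C - 1) : x = 0 :=
  eq_zero_of_le_sInf_sub_one (s := (C : Set (Fin n → ZMod 2))) (w := wtSp)
    (fun _ => wtSp_eq_zero.mp) hx hle

theorem IsCyclicCode.eq_zero_of_wtSymp_le_of_wtH_le (hC : IsCyclicCode C) (hx : x ∈ C) (hy : y ∈ C)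
    (hsymp : wtSymp x y ≤ dSp C - 1) (hH : wtH (y + R x) ≤ dH C - 1) : x = 0 ∧ y = 0 := by
  have hyx : y = R x :=
    CharTwo.add_eq_zero.mp (eq_zero_of_mem_of_wtH_le (C.add_mem hy (hC x hx)) hH)
  have hx0 : x = 0 := by
    rw [hyx, wtSymp_R] at hsymp
    exact eq_zero_of_mem_of_wtSp_le hx hsymp
  exact ⟨hx0, by rw [hyx, hx0, R_zero]⟩

end MinimumDistance

theorem css_symbol_pair_decoder_general {n : ℕ} [NeZero n]
    {C : Submodule (ZMod 2) (Fin n → ZMod 2)} (hcyc : IsCyclicCode C)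
    {a₁ b₁ a₂ b₂ : Fin n → ZMod 2}
    (h₁s : wtSymp a₁ b₁ ≤ (dSp C - 1) / 2) (h₁h : wtH (b₁ + R a₁) ≤ (dH C - 1) / 2)
    (h₂s : wtSymp a₂ b₂ ≤ (dSp C - 1) / 2) (h₂h : wtH (b₂ + R a₂) ≤ (dH C - 1) / 2)
    (hsa : a₁ + a₂ ∈ C) (hsb : b₁ + b₂ ∈ C) :
    a₁ = a₂ ∧ b₁ = b₂ := by
  have hsymp : wtSymp (a₁ + a₂) (b₁ + b₂) ≤ dSp C - 1 := by
    have hadd := wtSymp_add_le a₁ b₁ a₂ b₂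
    lia
  have hH : wtH (b₁ + b₂ + R (a₁ + a₂)) ≤ dH C - 1 := by
    have hadd := wtH_add_le (b₁ + R a₁) (b₂ + R a₂)
    rw [R_add, add_add_add_comm]
    lia
  obtain ⟨ha, hb⟩ := hcyc.eq_zero_of_wtSymp_le_of_wtH_le hsa hsb hsymp hH
  exact ⟨CharTwo.add_eq_zero.mp ha, CharTwo.add_eq_zero.mp hb⟩

/-- the CSS code from a dual-containing cyclic code C corrects every error
(a | b) with wt_symp(a|b) ≤ ⌊(d_p−1)/2⌋ and wt_H(b + R(a)) ≤ ⌊(d_H−1)/2⌋. -/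
theorem css_symbol_pair_decoder (n : ℕ) [NeZero n]
    (C : Submodule (ZMod 2) (Fin n → ZMod 2))
    (hcyc : IsCyclicCode C) (hdual : dualCode C ≤ C)
    (a₁ b₁ a₂ b₂ : Fin n → ZMod 2)
    (h₁s : wtSymp a₁ b₁ ≤ (dSp C - 1) / 2)
    (h₁h : wtH (b₁ + R a₁) ≤ (dH C - 1) / 2)
    (h₂s : wtSymp a₂ b₂ ≤ (dSp C - 1) / 2)
    (h₂h : wtH (b₂ + R a₂) ≤ (dH C - 1) / 2)
    (hsa : a₁ + a₂ ∈ C) (hsb : b₁ + b₂ ∈ C) :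
    a₁ = a₂ ∧ b₁ = b₂ :=
  css_symbol_pair_decoder_general hcyc h₁s h₁h h₂s h₂h hsa hsb
end

section
/- Let C ⊆ 𝔽₂ⁿ be a nonzero binary cyclic linear code whose minimum Hamming distance satisfies 0 < d_H(C) < n. Then its minimum symbol-pair distance satisfies d_sp(C) ≥ (3/2)·d_H(C), i.e. 2·d_sp(C) ≥ 3·d_H(C). -/
/-!
For bits `a` and `b`, the number of nonzero entries among `a`, `b`, `a + b` is `2` unless
`a = b = 0`. Summing this over consecutive pairs gives `2 wt_sp(x) = 2 wt_H(x) + wt_H(R x + x)`.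
If `x` is not constant, then both `x` and `R x + x` are nonzero codewords, which yields the bound.
A nonzero constant word has symbol-pair weight `n`, the largest possible, so if it attains
`d_sp(C)` it may be replaced by a word of minimum Hamming weight, which is not constant because
`d_H(C) < n`.
-/

section Weight

variable {n : ℕ}

theorem two_mul_wtSymp (a b : Fin n → ZMod 2) :
    2 * wtSymp a b = wtH a + wtH b + wtH (a + b) := by
  have two_mul_indicator : ∀ s t : ZMod 2,
      2 * (if (s, t) ≠ (0, 0) then 1 else 0) =
        (if s ≠ 0 then 1 else 0) + (if t ≠ 0 then 1 else 0) + if s + t ≠ 0 then 1 else 0 := by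
    decide
  simp only [wtSymp, wtH, Finset.card_filter, Finset.mul_sum, ← Finset.sum_add_distrib]
  exact Finset.sum_congr rfl fun i _ => two_mul_indicator (a i) (b i)

theorem wtH_eq_of_forall_ne_zero {x : Fin n → ZMod 2} (hx : ∀ i, x i ≠ 0) : wtH x = n := by
  simp [wtH, hx]

variable [NeZero n]

theorem wtSp_le (x : Fin n → ZMod 2) : wtSp x ≤ n :=
  (Finset.card_le_univ _).trans_eq (Fintype.card_fin n)

theorem wtH_le_wtSp (x : Fin n → ZMod 2) : wtH x ≤ wtSp x :=
  Finset.card_le_card <| Finset.monotone_filter_right _ fun _ _ hi h => hi (congrArg Prod.fst h)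

end Weight

section CyclicShift

variable {n : ℕ} [NeZero n]

theorem wtH_R (x : Fin n → ZMod 2) : wtH (R x) = wtH x :=
  Finset.card_equiv (Equiv.subRight 1) fun i => by
    rw [Finset.mem_filter_univ, Finset.mem_filter_univ, Equiv.subRight_apply, R]

theorem wtSp_eq_wtSymp_R (x : Fin n → ZMod 2) : wtSp x = wtSymp (R x) x :=
  Finset.card_equiv (Equiv.addRight 1) fun i => by simp [R]

theorem two_mul_wtSp (x : Fin n → ZMod 2) : 2 * wtSp x = 2 * wtH x + wtH (R x + x) := by
  rw [wtSp_eq_wtSymp_R, two_mul_wtSymp, wtH_R, two_mul]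

open Fin.CommRing in
theorem apply_eq_apply_zero_of_R_eq_self {x : Fin n → ZMod 2} (hR : R x = x) (i : Fin n) :
    x i = x 0 := by
  have hper : Function.Periodic x 1 := fun j => by simpa [R] using (congrFun hR (j + 1)).symm
  simpa using hper.nat_mul_eq i.val

theorem wtH_eq_of_R_eq_self {x : Fin n → ZMod 2} (hR : R x = x) (hx : x ≠ 0) : wtH x = n := by
  have hconst := apply_eq_apply_zero_of_R_eq_self hR
  have hx0 : x 0 ≠ 0 := fun h => hx (funext fun i => (hconst i).trans h)
  exact wtH_eq_of_forall_ne_zero fun i => (hconst i).trans_ne hx0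

end CyclicShift

section MinimumDistance

theorem exists_mem_ne_zero_eq_sInf_image {K V : Type*} [Semiring K] [AddCommMonoid V] [Module K V]
    {C : Submodule K V} (hC : C ≠ ⊥) (w : V → ℕ) :
    ∃ x ∈ C, x ≠ 0 ∧ w x = sInf (w '' {x | x ∈ C ∧ x ≠ 0}) := by
  have hne : {x | x ∈ C ∧ x ≠ 0}.Nonempty := C.exists_mem_ne_zero_of_ne_bot hC
  obtain ⟨x, ⟨hxC, hx⟩, hw⟩ := Nat.sInf_mem (hne.image w)
  exact ⟨x, hxC, hx, hw⟩

variable {n : ℕ} {C : Submodule (ZMod 2) (Fin n → ZMod 2)}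

theorem dH_le_wtH {x : Fin n → ZMod 2} (hxC : x ∈ C) (hx : x ≠ 0) : dH C ≤ wtH x :=
  Nat.sInf_le ⟨x, ⟨hxC, hx⟩, rfl⟩

theorem exists_wtH_eq_dH (hC : C ≠ ⊥) : ∃ x ∈ C, x ≠ 0 ∧ wtH x = dH C :=
  exists_mem_ne_zero_eq_sInf_image hC wtH

variable [NeZero n]

theorem exists_wtSp_eq_dSp (hC : C ≠ ⊥) : ∃ x ∈ C, x ≠ 0 ∧ wtSp x = dSp C :=
  exists_mem_ne_zero_eq_sInf_image hC wtSp

theorem IsCyclicCode.three_mul_dH_le_two_mul_wtSp (hcyc : IsCyclicCode C) {x : Fin n → ZMod 2}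
    (hxC : x ∈ C) (hR : R x ≠ x) : 3 * dH C ≤ 2 * wtSp x := by
  have hx : x ≠ 0 := by
    rintro rfl
    exact hR rfl
  have hsum : R x + x ≠ 0 := fun h => hR (CharTwo.add_eq_zero.mp h)
  calc 3 * dH C = 2 * dH C + dH C := by ring
    _ ≤ 2 * wtH x + wtH (R x + x) := by
      gcongr
      · exact dH_le_wtH hxC hx
      · exact dH_le_wtH (C.add_mem (hcyc x hxC) hxC) hsum
    _ = 2 * wtSp x := (two_mul_wtSp x).symm

end MinimumDistance

/-- for a nonzero cyclic code C with 0 < d_H(C) < n, 2·d_sp(C) ≥ 3·d_H(C). -/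
theorem cyclic_dSp_ge_three_halves_dH (n : ℕ) [NeZero n]
    (C : Submodule (ZMod 2) (Fin n → ZMod 2)) (hcyc : IsCyclicCode C)
    (hC : C ≠ ⊥) (h0 : 0 < dH C) (hn : dH C < n) :
    3 * dH C ≤ 2 * dSp C := by
  obtain ⟨x, hxC, hx, hxSp⟩ := exists_wtSp_eq_dSp hC
  rw [← hxSp]
  by_cases hR : R x = x
  · obtain ⟨y, hyC, hy, hyH⟩ := exists_wtH_eq_dH hC
    have hyR : R y ≠ y := fun h => hn.ne (hyH.symm.trans (wtH_eq_of_R_eq_self h hy))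
    calc 3 * dH C ≤ 2 * wtSp y := hcyc.three_mul_dH_le_two_mul_wtSp hyC hyR
      _ ≤ 2 * n := by gcongr; exact wtSp_le y
      _ = 2 * wtH x := by rw [wtH_eq_of_R_eq_self hR hx]
      _ ≤ 2 * wtSp x := by gcongr; exact wtH_le_wtSp x
  · exact hcyc.three_mul_dH_le_two_mul_wtSp hxC hR
end
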